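/- arXiv:1410.7095 — 2 statements merged into one kernel-verified Lean document; each statement's English description precedes it below -/
import Mathlib

section
/- Let T > 0, assume ∇K ∈ W^{1,∞}(ℝ^d), and let f₀ be a compactly supported Borel probability measure on ℝ^d × ℝ^d with x-marginal ρ₀. For each ε > 0 let f_ε : [0,T] → P(ℝ^d × ℝ^d) be a measure solution of the kinetic aggregation equation with inertia parameter ε and initial datum f₀, with x-marginals ρ_ε(t). Then there exists a family ρ(t) (t ∈ [0,T]) of compactly supported Borel probability measures on ℝ^d, narrowly continuous in t, such that: (a) for every t ∈ [0,T], ρ_ε(t) → ρ(t) weakly as ε → 0 (i.e., ∫ ψ dρ_ε(t) → ∫ ψ dρ(t) for every bounded continuous ψ : ℝ^d → ℝ); (b) ∇K ∗ ρ_ε → ∇K ∗ ρ uniformly on [0,T] × Ω for every compact Ω ⊂ ℝ^d; and (c) ρ is a weak solution of the aggregation equation ∂_t ρ = ∇·((∇K ∗ ρ) ρ) with initial datum ρ₀, i.e., for every ψ ∈ C¹_c([0,T); C¹_b(ℝ^d)), ∫₀^T ∫ ∂_t ψ(t,x) dρ(t)(x) dt − ∫₀^T ∫ ∇_x ψ(t,x)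 · (∇K ∗ ρ(t))(x) dρ(t)(x) dt + ∫ ψ(0,x) dρ₀(x) = 0. -/
open Set Filter Topology MeasureTheory BoundedContinuousFunction

/-- The interaction field `(∇K ∗ μ)(x) = ∫ ∇K(x - y) dμ(y)`. -/
noncomputable def interactionField {d : ℕ}
    (gradK : EuclideanSpace ℝ (Fin d) → EuclideanSpace ℝ (Fin d))
    (μ : Measure (EuclideanSpace ℝ (Fin d))) (x : EuclideanSpace ℝ (Fin d)) :
    EuclideanSpace ℝ (Fin d) :=
  ∫ y, gradK (x - y) ∂μ

/-- `f : [0,T] → P(ℝ^d × ℝ^d)` is a measure solution of the kinetic aggregation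
equation with inertia parameter `ε` and initial datum `f₀`: `f t` is the
push-forward of `f₀` under the flow map `Φ t` of the characteristic system
`dx/dt = v`, `ε dv/dt = -v - (∇K ∗ ρ)(t,x)`, where `ρ t` is the first marginal
of `f t`. -/
def IsKineticMeasureSolution {d : ℕ}
    (gradK : EuclideanSpace ℝ (Fin d) → EuclideanSpace ℝ (Fin d)) (ε T : ℝ)
    (f₀ : Measure (EuclideanSpace ℝ (Fin d) × EuclideanSpace ℝ (Fin d)))
    (f : ℝ → Measure (EuclideanSpace ℝ (Fin d) × EuclideanSpace ℝ (Fin d))) : Prop :=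
  ∃ Φ : ℝ → (EuclideanSpace ℝ (Fin d) × EuclideanSpace ℝ (Fin d)) →
        (EuclideanSpace ℝ (Fin d) × EuclideanSpace ℝ (Fin d)),
    (∀ t, Measurable (Φ t)) ∧
    (∀ p, Φ 0 p = p) ∧
    (∀ p, ∀ t ∈ Icc (0:ℝ) T,
      HasDerivAt (fun s => (Φ s p).1) ((Φ t p).2) t ∧
      HasDerivAt (fun s => (Φ s p).2)
        (ε⁻¹ • (-(Φ t p).2 -
          interactionField gradK ((f t).map Prod.fst) (Φ t p).1)) t) ∧
    (∀ t ∈ Icc (0:ℝ) T, f t = f₀.map (Φ t))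

section helpers
set_option linter.unusedSectionVars false
variable {E : Type*} [NormedAddCommGroup E] [NormedSpace ℝ E] [CompleteSpace E]
  [MeasurableSpace E] [BorelSpace E] [SecondCountableTopology E]

lemma integrable_comp_aux {Ω : Type*} [MeasurableSpace Ω] {P : Measure Ω} [IsProbabilityMeasure P]
    {g : E → E} {L : NNReal} {M : ℝ} (hb : ∀ z, ‖g z‖ ≤ M) (hl : LipschitzWith L g)
    {h : Ω → E} (hh : Measurable h) (x : E) : Integrable (fun q => g (x - h q)) P := by
  refine Integrable.of_bound (C := M) ?_ (Eventually.of_forall fun q => hb _)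
  exact (hl.continuous.measurable.comp (measurable_const.sub hh)).aestronglyMeasurable

/-- Difference of two fields under a uniform a.e. bound. -/
lemma field_diff_le {Ω : Type*} [MeasurableSpace Ω] {P : Measure Ω} [IsProbabilityMeasure P]
    {g : E → E} {L : NNReal} {M : ℝ} (hb : ∀ z, ‖g z‖ ≤ M) (hl : LipschitzWith L g)
    {h k : Ω → E} (hh : Measurable h) (hk : Measurable k) (x y : E) (D : ℝ)
    (hD : ∀ᵐ q ∂P, ‖h q - k q‖ ≤ D) :
    ‖(∫ q, g (x - h q) ∂P) - ∫ q, g (y - k q) ∂P‖ ≤ L * (‖x - y‖ + D) := by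
  rw [← integral_sub (integrable_comp_aux hb hl hh x) (integrable_comp_aux hb hl hk y)]
  have : ∀ᵐ q ∂P, ‖g (x - h q) - g (y - k q)‖ ≤ L * (‖x - y‖ + D) := by
    filter_upwards [hD] with q hq
    have h1 := hl.dist_le_mul (x - h q) (y - k q)
    rw [dist_eq_norm, dist_eq_norm] at h1
    refine h1.trans ?_
    gcongr
    calc ‖x - h q - (y - k q)‖ = ‖(x - y) - (h q - k q)‖ := by congr 1; abel
      _ ≤ ‖x - y‖ + ‖h q - k q‖ := norm_sub_le _ _
      _ ≤ _ := by gcongr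
  have h2 := norm_integral_le_of_norm_le_const this
  simpa using h2

lemma field_norm_le {Ω : Type*} [MeasurableSpace Ω] {P : Measure Ω} [IsProbabilityMeasure P]
    {g : E → E} {M : ℝ} (hb : ∀ z, ‖g z‖ ≤ M)
    (h : Ω → E) (x : E) : ‖∫ q, g (x - h q) ∂P‖ ≤ M := by
  have h2 := norm_integral_le_of_norm_le_const (μ := P) (f := fun q => g (x - h q))
    (Eventually.of_forall fun q => hb (x - h q))
  simpa using h2

/-- The limit flow. -/
lemma exists_limit_flow (P : Measure (E × E)) [IsProbabilityMeasure P]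
    {g : E → E} {L : NNReal} {M T : ℝ} (hM : 0 ≤ M) (hT : 0 < T)
    (hb : ∀ z, ‖g z‖ ≤ M) (hl : LipschitzWith L g) :
    ∃ X G : ℝ → E → E, Continuous (Function.uncurry X) ∧ Continuous (Function.uncurry G) ∧
      (∀ x, X 0 x = x) ∧ (∀ t x, G t x = - ∫ q, g (X t x - X t q.1) ∂P) ∧
      (∀ x, ∀ t ∈ Icc 0 T, HasDerivWithinAt (fun s => X s x) (G t x) (Icc 0 T) t) ∧
      (∀ x, ∀ t ∈ Icc 0 T, ‖X t x - x‖ ≤ M * T) := by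
  have hmeas : ∀ W : E →ᵇ E, Measurable (fun q : E × E => q.1 + W q.1) := fun W =>
    (by fun_prop : Continuous (fun q : E × E => q.1 + W q.1)).measurable
  let u : (E →ᵇ E) → E → E := fun W x => - ∫ q, g (x + W x - (q.1 + W q.1)) ∂P
  have hudiff : ∀ W W' x x', ‖u W x - u W' x'‖ ≤ L * (‖x + W x - (x' + W' x')‖ + dist W W') := by
    intro W W' x x'
    have := field_diff_le (P := P) hb hl (hmeas W) (hmeas W') (x + W x) (x' + W' x') (dist W W')
      (Eventually.of_forall fun q => by
        have := BoundedContinuousFunction.dist_coe_le_dist (f := W) (g := W') q.1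
        rw [dist_eq_norm] at this
        simpa using this)
    have h3 : u W x - u W' x' = -((∫ q, g (x + W x - (q.1 + W q.1)) ∂P)
      - ∫ q, g (x' + W' x' - (q.1 + W' q.1)) ∂P) := by simp only [u]; abel
    rw [h3, norm_neg]; exact this
  have hucont : ∀ W, Continuous (u W) := by
    intro W
    rw [continuous_iff_continuousAt]
    intro x
    rw [ContinuousAt, tendsto_iff_norm_sub_tendsto_zero]
    refine squeeze_zero (fun _ => norm_nonneg _) (fun y => hudiff W W y x) ?_
    have : Continuous (fun y => L * (‖y + W y - (x + W x)‖ + dist W W)) := by fun_prop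
    have h := this.tendsto x
    simpa using h
  let F : (E →ᵇ E) → (E →ᵇ E) := fun W =>
    BoundedContinuousFunction.ofNormedAddCommGroup (u W) (hucont W) M
      (fun x => by simp only [u, norm_neg]; exact field_norm_le hb _ _)
  have hFlip : LipschitzWith (2 * L) F := by
    refine LipschitzWith.of_dist_le_mul fun W W' => ?_
    rw [BoundedContinuousFunction.dist_le (by positivity)]
    intro x
    rw [dist_eq_norm]
    refine (hudiff W W' x x).trans ?_
    have := BoundedContinuousFunction.dist_coe_le_dist (f := W) (g := W') x
    rw [dist_eq_norm] at this
    have h4 : ‖x + W x - (x + W' x)‖ ≤ dist W W' := by simpa using this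
    push_cast
    nlinarith [L.coe_nonneg]
  have hFn : ∀ W, ‖F W‖ ≤ M := fun W =>
    (BoundedContinuousFunction.norm_le hM).2 fun x => by
      show ‖u W x‖ ≤ M
      simp only [u, norm_neg]; exact field_norm_le hb _ _
  have hPL : IsPicardLindelof (fun _ => F) (tmin := 0) (tmax := T) ⟨0, by simp [hT.le]⟩ 0
      (⟨M * T, by positivity⟩) 0 ⟨M, hM⟩ (2 * L) := by
    refine IsPicardLindelof.of_time_independent (fun W _ => hFn W) (hFlip.lipschitzOnWith) ?_
    simp [hT.le]
    exact le_rfl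
  obtain ⟨α, hα0, hα⟩ := hPL.exists_eq_forall_mem_Icc_hasDerivWithinAt₀
  have hαc : ContinuousOn α (Icc 0 T) := fun t ht => (hα t ht).continuousWithinAt
  let β : ℝ → (E →ᵇ E) := fun t => α (projIcc 0 T hT.le t)
  have hβc : Continuous β := by
    have := (continuousOn_iff_continuous_domRestrict.1 hαc).comp (continuous_projIcc (h := hT.le))
    exact this
  have hβα : ∀ t ∈ Icc 0 T, β t = α t := fun t ht => by simp [β, projIcc_of_mem hT.le ht]
  have hev : Continuous (fun p : (E →ᵇ E) × E => p.1 p.2) := by fun_prop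
  have hder : ∀ x, ∀ t ∈ Icc 0 T,
      HasDerivWithinAt (fun s => x + β s x) (u (β t) x) (Icc 0 T) t := by
    intro x t ht
    have h1 := (hα t ht).congr (f₁ := β) (fun s hs => hβα s hs) (hβα t ht)
    have h2 := (BoundedContinuousFunction.evalCLM ℝ (β := E) x).hasFDerivAt.comp_hasDerivWithinAt t h1
    rw [← hβα t ht] at h2
    exact h2.const_add x
  refine ⟨fun t x => x + β t x, fun t x => u (β t) x, ?_, ?_, ?_, ?_, hder, ?_⟩
  · exact continuous_snd.add (hev.comp ((hβc.comp continuous_fst).prodMk continuous_snd))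
  · have : Continuous (fun p : ℝ × E => F (β p.1) p.2) :=
      hev.comp (((hFlip.continuous.comp hβc).comp continuous_fst).prodMk continuous_snd)
    exact this
  · intro x
    have : β 0 = 0 := by rw [hβα 0 ⟨le_rfl, hT.le⟩]; exact hα0
    simp [this]
  · intro t x; rfl
  · intro x t ht
    have h := norm_image_sub_le_of_norm_deriv_le_segment' (hder x) (C := M) (fun s _ => by
      simp only [u, norm_neg]; exact field_norm_le hb _ _) t ht
    have h0 : β 0 = 0 := by rw [hβα 0 ⟨le_rfl, hT.le⟩]; exact hα0
    simp only [h0, BoundedContinuousFunction.coe_zero, Pi.zero_apply, add_zero, sub_zero] at h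
    refine h.trans ?_
    gcongr; exact ht.2

/-- Velocity bound for the inertial characteristics. -/
lemma velocity_bound {V a : ℝ → E} {ε T M R : ℝ} (hε : 0 < ε) (hM : 0 ≤ M) (hR : ‖V 0‖ ≤ R)
    (ha : ∀ t ∈ Icc 0 T, ‖a t‖ ≤ M)
    (hV : ∀ t ∈ Icc 0 T, HasDerivAt V (ε⁻¹ • (-V t - a t)) t) :
    ∀ t ∈ Icc 0 T, ‖V t‖ ≤ R + M := by
  have hexp : ∀ t : ℝ, HasDerivAt (fun s => Real.exp (s / ε)) (Real.exp (t / ε) * ε⁻¹) t := by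
    intro t
    have := ((hasDerivAt_id t).div_const ε).exp
    simpa [one_div] using this
  have hd : ∀ t ∈ Icc 0 T, HasDerivAt (fun s => Real.exp (s / ε) • V s)
      (-(Real.exp (t / ε) * ε⁻¹) • a t) t := by
    intro t ht
    have := (hexp t).smul (hV t ht)
    refine HasDerivAt.congr_deriv this ?_
    module
  have hB : ∀ t, HasDerivAt (fun s => R + M * (Real.exp (s / ε) - 1))
      (M * (Real.exp (t / ε) * ε⁻¹)) t := fun t =>
    (((hexp t).sub_const 1).const_mul M).const_add R
  intro t ht
  have h := image_norm_le_of_norm_deriv_right_le_deriv_boundary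
    (f := fun s => Real.exp (s / ε) • V s)
    (fun s hs => (hd s hs).continuousAt.continuousWithinAt)
    (fun s hs => (hd s ⟨hs.1, hs.2.le⟩).hasDerivWithinAt) (by simpa using hR) hB
    (fun s hs => by
      rw [norm_smul, norm_neg, Real.norm_of_nonneg (by positivity), mul_comm]
      gcongr
      exact ha s ⟨hs.1, hs.2.le⟩) ht
  simp only [norm_smul, Real.norm_eq_abs, Real.abs_exp] at h
  have h1 : 1 ≤ Real.exp (t / ε) := Real.one_le_exp (div_nonneg ht.1 hε.le)
  have hR0 : 0 ≤ R := (norm_nonneg _).trans hR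
  by_contra hc
  push Not at hc
  nlinarith

/-- Convergence rate of the characteristics. -/
lemma flow_estimate (P : Measure (E × E)) [IsProbabilityMeasure P]
    {g : E → E} {L : NNReal} {M T R ε : ℝ} (hM : 0 ≤ M) (hT : 0 < T) (hε : 0 < ε)
    (hb : ∀ z, ‖g z‖ ≤ M) (hl : LipschitzWith L g)
    (S : Set (E × E)) (hS : ∀ᵐ p ∂P, p ∈ S) (hSR : ∀ p ∈ S, ‖p.1‖ ≤ R ∧ ‖p.2‖ ≤ R)
    (X G : ℝ → E → E) (hX : Continuous (Function.uncurry X))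
    (hX0 : ∀ x, X 0 x = x) (hG : ∀ t x, G t x = - ∫ q, g (X t x - X t q.1) ∂P)
    (hXd : ∀ x, ∀ t ∈ Icc 0 T, HasDerivWithinAt (fun s => X s x) (G t x) (Icc 0 T) t)
    (hXb : ∀ x, ∀ t ∈ Icc 0 T, ‖X t x - x‖ ≤ M * T)
    (Φ : ℝ → E × E → E × E) (hΦm : ∀ t, Measurable (Φ t)) (hΦ0 : ∀ p, Φ 0 p = p)
    (hΦ1 : ∀ p, ∀ t ∈ Icc 0 T, HasDerivAt (fun s => (Φ s p).1) ((Φ t p).2) t)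
    (hΦ2 : ∀ p, ∀ t ∈ Icc 0 T, HasDerivAt (fun s => (Φ s p).2)
      (ε⁻¹ • (-(Φ t p).2 - ∫ q, g ((Φ t p).1 - (Φ t q).1) ∂P)) t) :
    ∀ p ∈ S, ∀ t ∈ Icc 0 T, ‖(Φ t p).1 - X t p.1‖ ≤
      ε * ((R + M) * (1 + 2 * (1 + 2 * L * T) * Real.exp (4 * (L + 1) * T))) := by
  set lam : ℝ := 4 * (L + 1) with hlam
  have hL0 : (0:ℝ) ≤ L := L.coe_nonneg
  have hlam0 : 0 < lam := by positivity
  have hSne : S.Nonempty := by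
    obtain ⟨p, hp⟩ := hS.exists
    exact ⟨p, hp⟩
  have hR0 : 0 ≤ R := by
    obtain ⟨p, hp⟩ := hSne
    exact (norm_nonneg _).trans (hSR p hp).1
  have hVb : ∀ p ∈ S, ∀ t ∈ Icc 0 T, ‖(Φ t p).2‖ ≤ R + M := by
    intro p hp
    exact velocity_bound (V := fun t => (Φ t p).2)
      (a := fun t => ∫ q, g ((Φ t p).1 - (Φ t q).1) ∂P) hε hM
      (by simpa [hΦ0] using (hSR p hp).2) (fun t _ => field_norm_le hb _ _) (hΦ2 p)
  let Z : E × E → ℝ → E := fun p t => (Φ t p).1 + ε • (Φ t p).2 - X t p.1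
  have hZd : ∀ p, ∀ t ∈ Icc 0 T, HasDerivWithinAt (Z p)
      (-((∫ q, g ((Φ t p).1 - (Φ t q).1) ∂P) - ∫ q, g (X t p.1 - X t q.1) ∂P)) (Icc 0 T) t := by
    intro p t ht
    have h1 := (((hΦ1 p t ht).add ((hΦ2 p t ht).const_smul ε)).hasDerivWithinAt (s := Icc 0 T)).sub
      (hXd p.1 t ht)
    refine HasDerivWithinAt.congr_deriv h1 ?_
    rw [hG, smul_smul, mul_inv_cancel₀ hε.ne', one_smul]
    abel
  have hZ0 : ∀ p, Z p 0 = ε • p.2 := by intro p; simp [Z, hΦ0, hX0]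
  have hXm : ∀ t, Measurable (fun q : E × E => X t q.1) := fun t =>
    (hX.comp (by fun_prop : Continuous (fun q : E × E => (t, q.1)))).measurable
  have hdiff : ∀ p ∈ S, ∀ t ∈ Icc 0 T, ‖(Φ t p).1 - X t p.1‖ ≤ ‖Z p t‖ + ε * (R + M) := by
    intro p hp t ht
    have : (Φ t p).1 - X t p.1 = Z p t - ε • (Φ t p).2 := by simp only [Z]; abel
    rw [this]
    refine (norm_sub_le _ _).trans ?_
    rw [norm_smul, Real.norm_of_nonneg hε.le]
    gcongr
    exact hVb p hp t ht
  -- crude bound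
  have hZcrude : ∀ p ∈ S, ∀ t ∈ Icc 0 T, ‖Z p t‖ ≤ ε * R + 2 * M * T := by
    intro p hp t ht
    have h := norm_image_sub_le_of_norm_deriv_le_segment' (hZd p) (C := 2 * M) (fun s _ => by
      rw [norm_neg, two_mul]
      exact (norm_sub_le _ _).trans (add_le_add (field_norm_le hb _ _) (field_norm_le hb _ _))) t ht
    have h2 : ‖Z p 0‖ ≤ ε * R := by
      rw [hZ0, norm_smul, Real.norm_of_nonneg hε.le]
      gcongr; exact (hSR p hp).2
    have h3 : ‖Z p t‖ ≤ ‖Z p t - Z p 0‖ + ‖Z p 0‖ := by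
      simpa using norm_add_le (Z p t - Z p 0) (Z p 0)
    have h4 : 2 * M * (t - 0) ≤ 2 * M * T := by
      gcongr; linarith [ht.2]
    linarith
  -- improvement step
  have hstep : ∀ A : ℝ, 0 ≤ A → (∀ p ∈ S, ∀ t ∈ Icc 0 T, ‖Z p t‖ ≤ A * Real.exp (lam * t)) →
      ∀ p ∈ S, ∀ t ∈ Icc 0 T, ‖Z p t‖ ≤
        (ε * (R + M) * (1 + 2 * L * T) + A / 2) * Real.exp (lam * t) := by
    intro A hA hAb p hp t ht
    have hexp : ∀ t : ℝ, HasDerivAt (fun s => Real.exp (lam * s)) (Real.exp (lam * t) * lam) t := by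
      intro t
      have := ((hasDerivAt_id t).const_mul lam).exp
      simpa using this
    have hB : ∀ t : ℝ, HasDerivAt (fun s => ε * (R + M) + 2 * L * ε * (R + M) * s
        + A / 2 * Real.exp (lam * s))
        (2 * L * ε * (R + M) + A / 2 * (Real.exp (lam * t) * lam)) t := by
      intro t
      have := (((hasDerivAt_id t).const_mul (2 * L * ε * (R + M))).const_add (ε * (R + M))).add
        ((hexp t).const_mul (A / 2))
      exact HasDerivAt.congr_deriv this (by simp)
    have h := image_norm_le_of_norm_deriv_right_le_deriv_boundary (f := Z p)
      (fun s hs => (hZd p s hs).continuousWithinAt)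
      (fun s hs => (hZd p s ⟨hs.1, hs.2.le⟩).mono_of_mem_nhdsWithin
        (Icc_mem_nhdsGE_of_mem hs)) (by
          rw [hZ0, norm_smul, Real.norm_of_nonneg hε.le]
          have := (hSR p hp).2
          simp only [mul_zero, add_zero, Real.exp_zero, mul_one]
          have : ε * ‖p.2‖ ≤ ε * (R + M) := by gcongr; linarith
          linarith) hB
      (fun s hs => by
        have hs' : s ∈ Icc 0 T := ⟨hs.1, hs.2.le⟩
        rw [norm_neg]
        have hq : ∀ q ∈ S, ‖(Φ s q).1 - X s q.1‖ ≤ A * Real.exp (lam * s) + ε * (R + M) :=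
          fun q hq => (hdiff q hq s hs').trans (by gcongr; exact hAb q hq s hs')
        have h5 := field_diff_le (P := P) hb hl (measurable_fst.comp (hΦm s)) (hXm s)
          (Φ s p).1 (X s p.1) (A * Real.exp (lam * s) + ε * (R + M))
          (by filter_upwards [hS] with q hqS using hq q hqS)
        refine h5.trans ?_
        have h6 := mul_le_mul_of_nonneg_left (hq p hp) hL0
        have h7 : 0 ≤ A * Real.exp (lam * s) := by positivity
        rw [hlam] at *
        nlinarith) ht
    have h1 : 1 ≤ Real.exp (lam * t) := Real.one_le_exp (mul_nonneg hlam0.le ht.1)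
    have h2 : ε * (R + M) + 2 * L * ε * (R + M) * t ≤ ε * (R + M) * (1 + 2 * L * T) := by
      have : 2 * L * ε * (R + M) * t ≤ 2 * L * ε * (R + M) * T := by gcongr; exact ht.2
      linarith
    have h3 : 0 ≤ ε * (R + M) * (1 + 2 * L * T) := by positivity
    nlinarith
  set K := ε * (R + M) * (1 + 2 * L * T) with hK
  have hK0 : 0 ≤ K := by positivity
  have hiter : ∀ n : ℕ, ∀ p ∈ S, ∀ t ∈ Icc 0 T,
      ‖Z p t‖ ≤ (2 * K + (ε * R + 2 * M * T) * (1 / 2) ^ n) * Real.exp (lam * t) := by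
    intro n
    induction n with
    | zero =>
      intro p hp t ht
      have h1 : 1 ≤ Real.exp (lam * t) := Real.one_le_exp (mul_nonneg hlam0.le ht.1)
      have h2 : 0 ≤ ε * R + 2 * M * T := by positivity
      have := hZcrude p hp t ht
      simp only [pow_zero, mul_one]
      nlinarith
    | succ n ih =>
      intro p hp t ht
      refine (hstep _ (by positivity) ih p hp t ht).trans (le_of_eq ?_)
      ring
  intro p hp t ht
  have hlim : ‖Z p t‖ ≤ 2 * K * Real.exp (lam * t) := by
    have : Tendsto (fun n : ℕ => (2 * K + (ε * R + 2 * M * T) * (1 / 2 : ℝ) ^ n)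
        * Real.exp (lam * t)) atTop (𝓝 ((2 * K + (ε * R + 2 * M * T) * 0) * Real.exp (lam * t))) :=
      ((tendsto_pow_atTop_nhds_zero_of_lt_one (by norm_num) (by norm_num)).const_mul _
        |>.const_add _).mul_const _
    have h := ge_of_tendsto' this (fun n => hiter n p hp t ht)
    simpa using h
  have hmono : Real.exp (lam * t) ≤ Real.exp (lam * T) := by
    gcongr; exact ht.2
  have h1 := hdiff p hp t ht
  have h2 : 2 * K * Real.exp (lam * t) ≤ 2 * K * Real.exp (lam * T) := by gcongr
  calc _ ≤ 2 * K * Real.exp (lam * T) + ε * (R + M) := by linarith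
    _ = _ := by rw [hK]; ring
end helpers

/-- **Macroscopic (zero-inertia) limit of the kinetic aggregation equation
(Theorem 5.1).** Let `∇K ∈ W^{1,∞}`, `f₀` a compactly supported probability
measure on `ℝ^d × ℝ^d`, and for each `ε > 0` let `fε ε` be a measure solution
of the kinetic equation with inertia parameter `ε`, with x-marginals
`ρ_ε t = (fε ε t).map Prod.fst`. Then there is a narrowly continuous family
`ρ t` of compactly supported probability measures such that
(a) `ρ_ε t → ρ t` weakly as `ε → 0⁺` for each `t ∈ [0,T]`;
(b) `∇K ∗ ρ_ε → ∇K ∗ ρ` uniformly on `[0,T] × Ω` for every compact `Ω`;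
(c) `ρ` is a weak solution of `∂ₜρ = ∇·((∇K ∗ ρ) ρ)` with initial datum
`ρ₀ = f₀.map Prod.fst`, tested against `ψ ∈ C¹_c([0,T); C¹_b(ℝ^d))`. -/
theorem macroscopic_limit_kinetic_aggregation
    (d : ℕ) (T M : ℝ) (hT : 0 < T) (hM : 0 ≤ M)
    (gradK : EuclideanSpace ℝ (Fin d) → EuclideanSpace ℝ (Fin d)) (L : NNReal)
    (hbound : ∀ z, ‖gradK z‖ ≤ M)
    (hlip : LipschitzWith L gradK)
    (f₀ : Measure (EuclideanSpace ℝ (Fin d) × EuclideanSpace ℝ (Fin d)))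
    [IsProbabilityMeasure f₀]
    (hsupp : ∃ R₀ : ℝ, f₀ {p | R₀ < max ‖p.1‖ ‖p.2‖} = 0)
    (fε : ℝ → ℝ → Measure (EuclideanSpace ℝ (Fin d) × EuclideanSpace ℝ (Fin d)))
    (hfε : ∀ ε > (0:ℝ), IsKineticMeasureSolution gradK ε T f₀ (fε ε)) :
    ∃ ρ : ℝ → Measure (EuclideanSpace ℝ (Fin d)),
      (∀ t ∈ Icc (0:ℝ) T, IsProbabilityMeasure (ρ t)) ∧
      (∃ R : ℝ, ∀ t ∈ Icc (0:ℝ) T, ρ t {x | R < ‖x‖} = 0) ∧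
      -- narrow continuity in time
      (∀ ψ : BoundedContinuousFunction (EuclideanSpace ℝ (Fin d)) ℝ,
        ContinuousOn (fun t => ∫ x, ψ x ∂(ρ t)) (Icc 0 T)) ∧
      -- (a) weak convergence of the marginals for every t
      (∀ t ∈ Icc (0:ℝ) T,
        ∀ ψ : BoundedContinuousFunction (EuclideanSpace ℝ (Fin d)) ℝ,
          Tendsto (fun ε => ∫ x, ψ x ∂((fε ε t).map Prod.fst)) (𝓝[>] (0:ℝ))
            (𝓝 (∫ x, ψ x ∂(ρ t)))) ∧
      -- (b) locally uniform convergence of the interaction fields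
      (∀ Ω : Set (EuclideanSpace ℝ (Fin d)), IsCompact Ω →
        TendstoUniformlyOn
          (fun ε (p : ℝ × EuclideanSpace ℝ (Fin d)) =>
            interactionField gradK ((fε ε p.1).map Prod.fst) p.2)
          (fun p => interactionField gradK (ρ p.1) p.2)
          (𝓝[>] (0:ℝ)) (Icc 0 T ×ˢ Ω)) ∧
      -- (c) ρ is a weak solution of the aggregation equation ∂ₜρ = ∇·((∇K ∗ ρ) ρ)
      (∀ ψ : ℝ × EuclideanSpace ℝ (Fin d) → ℝ,
        ContDiff ℝ 1 ψ →
        (∃ T' : ℝ, T' < T ∧ ∀ t, T' ≤ t → ∀ x, ψ (t, x) = 0) →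
        (∃ Cψ : ℝ, ∀ p, |ψ p| ≤ Cψ ∧ ‖fderiv ℝ ψ p‖ ≤ Cψ) →
        (∫ t in (0:ℝ)..T, ∫ x, fderiv ℝ ψ (t, x) (1, 0) ∂(ρ t)) -
          (∫ t in (0:ℝ)..T, ∫ x,
            fderiv ℝ ψ (t, x) (0, interactionField gradK (ρ t) x) ∂(ρ t)) +
          (∫ x, ψ (0, x) ∂(f₀.map Prod.fst)) = 0) := by
  obtain ⟨R₀, hR₀⟩ := hsupp
  set S : Set (EuclideanSpace ℝ (Fin d) × EuclideanSpace ℝ (Fin d)) :=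
    {p | max ‖p.1‖ ‖p.2‖ ≤ R₀} with hSdef
  have hS : ∀ᵐ p ∂f₀, p ∈ S := by
    rw [ae_iff]
    refine (congrArg f₀ (Set.ext fun p => ?_)).trans hR₀
    exact (not_le : ¬ (max ‖p.1‖ ‖p.2‖ ≤ R₀) ↔ R₀ < max ‖p.1‖ ‖p.2‖)
  have hSR : ∀ p ∈ S, ‖p.1‖ ≤ R₀ ∧ ‖p.2‖ ≤ R₀ := fun p hp => max_le_iff.1 hp
  obtain ⟨X, G, hX, hGc, hX0, hG, hXd, hXb⟩ := exists_limit_flow f₀ hM hT hbound hlip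
  have hXm : ∀ t, Measurable (fun q : EuclideanSpace ℝ (Fin d) × EuclideanSpace ℝ (Fin d) =>
      X t q.1) := fun t =>
    (hX.comp (by fun_prop : Continuous
      (fun q : EuclideanSpace ℝ (Fin d) × EuclideanSpace ℝ (Fin d) => (t, q.1)))).measurable
  choose! Φ hΦm hΦ0 hΦd hΦf using hfε
  have hmapε : ∀ ε > 0, ∀ t ∈ Icc 0 T,
      (fε ε t).map Prod.fst = f₀.map (fun q => (Φ ε t q).1) := by
    intro ε hε t ht
    rw [hΦf ε hε t ht, Measure.map_map measurable_fst (hΦm ε hε t)]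
    rfl
  have hΦm1 : ∀ ε > 0, ∀ t, Measurable (fun q => (Φ ε t q).1) := fun ε hε t =>
    measurable_fst.comp (hΦm ε hε t)
  have hfield : ∀ h : EuclideanSpace ℝ (Fin d) × EuclideanSpace ℝ (Fin d) →
      EuclideanSpace ℝ (Fin d), Measurable h → ∀ x,
      interactionField gradK (f₀.map h) x = ∫ q, gradK (x - h q) ∂f₀ := by
    intro h hh x
    rw [interactionField, integral_map hh.aemeasurable]
    exact (hlip.continuous.measurable.comp
      (measurable_const.sub measurable_id)).aestronglyMeasurable
  set C : ℝ := (R₀ + M) * (1 + 2 * (1 + 2 * L * T) * Real.exp (4 * (L + 1) * T)) with hC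
  have hest : ∀ ε > 0, ∀ p ∈ S, ∀ t ∈ Icc 0 T, ‖(Φ ε t p).1 - X t p.1‖ ≤ ε * C := by
    intro ε hε
    refine flow_estimate f₀ hM hT hε hbound hlip S hS hSR X G hX hX0 hG hXd hXb (Φ ε)
      (hΦm ε hε) (hΦ0 ε hε) (fun p t ht => (hΦd ε hε p t ht).1) (fun p t ht => ?_)
    have := (hΦd ε hε p t ht).2
    rw [hmapε ε hε t ht, hfield _ (hΦm1 ε hε t)] at this
    exact this
  have hpos : ∀ᶠ ε in 𝓝[>] (0:ℝ), 0 < ε := eventually_mem_nhdsWithin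
  have hlim0 : ∀ c : ℝ, Tendsto (fun ε : ℝ => ε * c) (𝓝[>] 0) (𝓝 0) := by
    intro c
    have : Tendsto (fun ε : ℝ => ε * c) (𝓝 0) (𝓝 (0 * c)) := (continuous_mul_const c).tendsto 0
    rw [zero_mul] at this
    exact this.mono_left nhdsWithin_le_nhds
  refine ⟨fun t => f₀.map (fun q => X t q.1), ?_, ⟨R₀ + M * T, ?_⟩, ?_, ?_, ?_, ?_⟩
  · intro t _
    exact Measure.isProbabilityMeasure_map (hXm t).aemeasurable
  · intro t ht
    rw [Measure.map_apply (hXm t) (measurableSet_lt measurable_const measurable_norm)]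
    have : ∀ᵐ p ∂f₀, ¬ (R₀ + M * T < ‖X t p.1‖) := by
      filter_upwards [hS] with p hp
      have h1 := hXb p.1 t ht
      have h2 := (hSR p hp).1
      have h3 : ‖X t p.1‖ ≤ ‖X t p.1 - p.1‖ + ‖p.1‖ := by
        simpa using norm_add_le (X t p.1 - p.1) p.1
      linarith
    rw [ae_iff] at this
    simpa using this
  · intro ψ
    have h1 : ∀ t, ∫ x, ψ x ∂(f₀.map (fun q => X t q.1)) = ∫ q, ψ (X t q.1) ∂f₀ := fun t =>
      integral_map (hXm t).aemeasurable ψ.continuous.measurable.aestronglyMeasurable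
    simp only [h1]
    refine Continuous.continuousOn ?_
    refine continuous_of_dominated (bound := fun _ => ‖ψ‖)
      (fun t => (ψ.continuous.measurable.comp (hXm t)).aestronglyMeasurable)
      (fun t => Eventually.of_forall fun q => ψ.norm_coe_le_norm _) (integrable_const _)
      (Eventually.of_forall fun q => ψ.continuous.comp (hX.comp (by fun_prop :
        Continuous (fun t : ℝ => (t, q.1)))))
  · intro t ht ψ
    rw [integral_map (hXm t).aemeasurable ψ.continuous.measurable.aestronglyMeasurable]
    have h1 : (fun ε => ∫ q, ψ (Φ ε t q).1 ∂f₀) =ᶠ[𝓝[>] (0:ℝ)]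
        (fun ε => ∫ x, ψ x ∂((fε ε t).map Prod.fst)) := by
      filter_upwards [hpos] with ε hε
      rw [hmapε ε hε t ht, integral_map (hΦm1 ε hε t).aemeasurable
        ψ.continuous.measurable.aestronglyMeasurable]
    refine Tendsto.congr' h1 ?_
    refine tendsto_integral_filter_of_dominated_convergence (fun _ => ‖ψ‖) ?_ ?_
      (integrable_const _) ?_
    · filter_upwards [hpos] with ε hε
      exact (ψ.continuous.measurable.comp (hΦm1 ε hε t)).aestronglyMeasurable
    · exact Eventually.of_forall fun ε => Eventually.of_forall fun q => ψ.norm_coe_le_norm _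
    · filter_upwards [hS] with q hq
      refine (ψ.continuous.tendsto _).comp ?_
      rw [tendsto_iff_norm_sub_tendsto_zero]
      refine squeeze_zero' (Eventually.of_forall fun _ => norm_nonneg _) ?_ (hlim0 C)
      filter_upwards [hpos] with ε hε using hest ε hε q hq t ht
  · intro Ω _
    rw [Metric.tendstoUniformlyOn_iff]
    intro δ hδ
    have h1 : ∀ᶠ ε in 𝓝[>] (0:ℝ), ε * (L * C) < δ := (hlim0 _).eventually_lt_const hδ
    filter_upwards [h1, hpos] with ε hεδ hε p hp
    rw [hmapε ε hε p.1 hp.1, hfield _ (hΦm1 ε hε p.1), hfield _ (hXm p.1), dist_comm, dist_eq_norm]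
    have h2 := field_diff_le (P := f₀) hbound hlip (hΦm1 ε hε p.1) (hXm p.1) p.2 p.2 (ε * C)
      (by filter_upwards [hS] with q hq using hest ε hε q hq p.1 hp.1)
    refine h2.trans_lt ?_
    rw [sub_self, norm_zero, zero_add]
    linarith
  · rintro ψ hψ ⟨T', hT', hψ0⟩ ⟨Cψ, hCψ⟩
    have hψd : Continuous (fderiv ℝ ψ) := hψ.continuous_fderiv one_ne_zero
    have hCψ0 : 0 ≤ Cψ := (norm_nonneg _).trans (hCψ (0, 0)).2
    have hfieldX : ∀ t x, interactionField gradK (f₀.map (fun q => X t q.1)) (X t x) = - G t x := by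
      intro t x
      rw [hfield _ (hXm t), hG, neg_neg]
    have hfieldc : ∀ t, Continuous (interactionField gradK (f₀.map (fun q => X t q.1))) := by
      intro t
      have : interactionField gradK (f₀.map (fun q => X t q.1)) =
          fun x => ∫ q, gradK (x - X t q.1) ∂f₀ := funext fun x => hfield _ (hXm t) x
      rw [this]
      refine continuous_of_dominated (bound := fun _ => M) ?_
        (fun x => Eventually.of_forall fun q => hbound _) (integrable_const _)
        (Eventually.of_forall fun q => hlip.continuous.comp (by fun_prop))
      intro x
      exact (hlip.continuous.measurable.comp
        (measurable_const.sub (hXm t))).aestronglyMeasurable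
    have hGb : ∀ t x, ‖G t x‖ ≤ M := by
      intro t x
      rw [hG, norm_neg]
      exact field_norm_le hbound _ _
    have hXq : Continuous (fun z : ℝ × (EuclideanSpace ℝ (Fin d) × EuclideanSpace ℝ (Fin d)) =>
        X z.1 z.2.1) := hX.comp (by fun_prop : Continuous
          (fun z : ℝ × (EuclideanSpace ℝ (Fin d) × EuclideanSpace ℝ (Fin d)) => (z.1, z.2.1)))
    have hGq : Continuous (fun z : ℝ × (EuclideanSpace ℝ (Fin d) × EuclideanSpace ℝ (Fin d)) =>
        G z.1 z.2.1) := hGc.comp (by fun_prop : Continuous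
          (fun z : ℝ × (EuclideanSpace ℝ (Fin d) × EuclideanSpace ℝ (Fin d)) => (z.1, z.2.1)))
    let a : ℝ → EuclideanSpace ℝ (Fin d) × EuclideanSpace ℝ (Fin d) → ℝ :=
      fun t q => fderiv ℝ ψ (t, X t q.1) (1, 0)
    let b : ℝ → EuclideanSpace ℝ (Fin d) × EuclideanSpace ℝ (Fin d) → ℝ :=
      fun t q => fderiv ℝ ψ (t, X t q.1) (0, - G t q.1)
    have hac : Continuous (Function.uncurry a) :=
      (hψd.comp (continuous_fst.prodMk hXq)).clm_apply continuous_const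
    have hbc : Continuous (Function.uncurry b) :=
      (hψd.comp (continuous_fst.prodMk hXq)).clm_apply (continuous_const.prodMk hGq.neg)
    have hab : ∀ t q, ‖a t q‖ ≤ Cψ := by
      intro t q
      refine ((fderiv ℝ ψ (t, X t q.1)).le_opNorm _).trans ?_
      have : ‖((1 : ℝ), (0 : EuclideanSpace ℝ (Fin d)))‖ = 1 := by simp [Prod.norm_def]
      rw [this, mul_one]
      exact (hCψ _).2
    have hbb : ∀ t q, ‖b t q‖ ≤ Cψ * M := by
      intro t q
      refine ((fderiv ℝ ψ (t, X t q.1)).le_opNorm _).trans ?_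
      have : ‖((0 : ℝ), - G t q.1)‖ ≤ M := by simpa [Prod.norm_def, hM] using hGb t q.1
      gcongr
      exact (hCψ _).2
    have hfin : IsFiniteMeasure ((volume : Measure ℝ).restrict (Set.uIoc 0 T)) := by
      rw [uIoc_of_le hT.le]; infer_instance
    have hai : Integrable (Function.uncurry a) ((volume.restrict (Set.uIoc 0 T)).prod f₀) :=
      Integrable.of_bound hac.measurable.aestronglyMeasurable Cψ
        (Eventually.of_forall fun z => hab z.1 z.2)
    have hbi : Integrable (Function.uncurry b) ((volume.restrict (Set.uIoc 0 T)).prod f₀) :=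
      Integrable.of_bound hbc.measurable.aestronglyMeasurable (Cψ * M)
        (Eventually.of_forall fun z => hbb z.1 z.2)
    have e1 : ∀ t, ∫ x, fderiv ℝ ψ (t, x) (1, 0) ∂(f₀.map (fun q => X t q.1)) = ∫ q, a t q ∂f₀ := by
      intro t
      refine integral_map (hXm t).aemeasurable ?_
      have : Continuous (fun x => fderiv ℝ ψ (t, x) (1, 0)) :=
        (hψd.comp (by fun_prop)).clm_apply continuous_const
      exact this.measurable.aestronglyMeasurable
    have e2 : ∀ t, ∫ x, fderiv ℝ ψ (t, x)
        (0, interactionField gradK (f₀.map (fun q => X t q.1)) x) ∂(f₀.map (fun q => X t q.1))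
        = ∫ q, b t q ∂f₀ := by
      intro t
      rw [integral_map (hXm t).aemeasurable]
      · simp only [hfieldX, b]
      · have : Continuous (fun x => fderiv ℝ ψ (t, x)
            (0, interactionField gradK (f₀.map (fun q => X t q.1)) x)) :=
          (hψd.comp (by fun_prop)).clm_apply (continuous_const.prodMk (hfieldc t))
        exact this.measurable.aestronglyMeasurable
    have e3 : ∫ x, ψ (0, x) ∂(f₀.map Prod.fst) = ∫ q, ψ (0, q.1) ∂f₀ := by
      refine integral_map measurable_fst.aemeasurable ?_
      exact (hψ.continuous.comp (by fun_prop)).measurable.aestronglyMeasurable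
    simp only [e1, e2, e3]
    rw [intervalIntegral_integral_swap hai, intervalIntegral_integral_swap hbi]
    have hcurveX : ∀ x, Continuous (fun t => X t x) := fun x =>
      hX.comp (by fun_prop : Continuous (fun t : ℝ => (t, x)))
    have hat : ∀ q, IntervalIntegrable (fun t => a t q) volume 0 T := fun q =>
      (hac.comp (by fun_prop : Continuous (fun t : ℝ => (t, q)))).intervalIntegrable _ _
    have hbt : ∀ q, IntervalIntegrable (fun t => b t q) volume 0 T := fun q =>
      (hbc.comp (by fun_prop : Continuous (fun t : ℝ => (t, q)))).intervalIntegrable _ _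
    have key : ∀ q : EuclideanSpace ℝ (Fin d) × EuclideanSpace ℝ (Fin d),
        (∫ t in (0:ℝ)..T, a t q) - ∫ t in (0:ℝ)..T, b t q = - ψ (0, q.1) := by
      intro q
      rw [← intervalIntegral.integral_sub (hat q) (hbt q)]
      have h := intervalIntegral.integral_eq_sub_of_hasDerivAt_of_le
        (f := fun t => ψ (t, X t q.1)) (f' := fun t => a t q - b t q) hT.le
        (hψ.continuous.comp (continuous_id.prodMk (hcurveX q.1))).continuousOn ?_
        ((hat q).sub (hbt q))
      · rw [h, hψ0 T hT'.le, hX0, zero_sub]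
      · intro t ht
        have hd1 : HasDerivAt (fun s => X s q.1) (G t q.1) t :=
          (hXd q.1 t ⟨ht.1.le, ht.2.le⟩).hasDerivAt (Icc_mem_nhds ht.1 ht.2)
        have hd2 := ((hψ.differentiable one_ne_zero) (t, X t q.1)).hasFDerivAt.comp_hasDerivAt t
          ((hasDerivAt_id t).prodMk hd1)
        refine HasDerivAt.congr_deriv hd2 ?_
        simp only [a, b, ← map_sub]
        congr 1
        simp
    have hai' : Integrable (fun q => ∫ t in (0:ℝ)..T, a t q) f₀ := by
      simp only [intervalIntegral.integral_of_le hT.le]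
      rw [uIoc_of_le hT.le] at hai
      exact hai.integral_prod_right
    have hbi' : Integrable (fun q => ∫ t in (0:ℝ)..T, b t q) f₀ := by
      simp only [intervalIntegral.integral_of_le hT.le]
      rw [uIoc_of_le hT.le] at hbi
      exact hbi.integral_prod_right
    rw [← integral_sub hai' hbi']
    simp only [key]
    rw [integral_neg, neg_add_cancel]
end

section
/- In the setting of the zero-inertia limit of the kinetic aggregation model — ∇K ∈ W^{1,∞}(ℝ^d), f₀ a compactly supported Borel probability measure on ℝ^d × ℝ^d, f_ε the measure solutions with inertia parameter ε and x-marginals ρ_ε(t), and ρ(t) a narrowly continuous family of compactly supported probability measures such that ∇K ∗ ρ_ε → ∇K ∗ ρ uniformly on [0,T] × Ω for every compact Ω ⊂ ℝ^d — let (x₀, v₀) ∈ supp f₀ and let (x_ε(t), v_ε(t)) be the characteristic path solving dx/dt = v, ε dv/dt = −v − (∇K ∗ ρ_ε)(t,x) with (x_ε(0), v_ε(0)) = (x₀, v₀). Then as ε → 0: x_ε(t) → x(t) for all t ∈ [0,T], where x(t) is the solution of dx/dt = −(∇K ∗ ρ)(t,x) with x(0) = x₀; and v_ε(t) → −(∇K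 ∗ ρ)(t, x(t)) for all t ∈ (0,T]. -/
open Set Filter Topology MeasureTheory BoundedContinuousFunction

/-- Relaxation estimate for `ε v' = -v - g` when `g` is close to the constant `G`. -/
lemma relax_estimate {E : Type*} [NormedAddCommGroup E] [NormedSpace ℝ E]
    {ε a b η : ℝ} (hε : 0 < ε) (hab : a ≤ b) (v g : ℝ → E) (G : E)
    (hη : 0 ≤ η)
    (hv : ∀ t ∈ Icc a b, HasDerivAt v (ε⁻¹ • (-(v t) - g t)) t)
    (hg : ∀ t ∈ Icc a b, ‖g t - G‖ ≤ η) :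
    ‖v b + G‖ ≤ Real.exp (-((b - a) / ε)) * ‖v a + G‖ + η := by
  have hexp : ∀ t, HasDerivAt (fun s : ℝ => Real.exp ((s - a) / ε))
      (Real.exp ((t - a) / ε) * ε⁻¹) t := by
    intro t
    have h1 : HasDerivAt (fun s : ℝ => (s - a) / ε) (ε⁻¹) t := by
      simpa [one_div] using ((hasDerivAt_id t).sub_const a).div_const ε
    exact h1.exp
  have hf : ∀ t ∈ Icc a b, HasDerivAt (fun s => Real.exp ((s - a) / ε) • (v s + G))
      ((Real.exp ((t - a) / ε) * ε⁻¹) • (G - g t)) t := by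
    intro t ht
    have := (hexp t).smul ((hv t ht).add_const G)
    refine HasDerivAt.congr_deriv this ?_
    rw [smul_smul, ← smul_add]
    congr 1
    abel
  have key := image_norm_le_of_norm_deriv_right_le_deriv_boundary
    (f := fun s => Real.exp ((s - a) / ε) • (v s + G)) (a := a) (b := b)
    (f' := fun t => (Real.exp ((t - a) / ε) * ε⁻¹) • (G - g t))
    (fun t ht => (hf t ht).continuousAt.continuousWithinAt)
    (fun t ht => (hf t (Ico_subset_Icc_self ht)).hasDerivWithinAt)
    (B := fun s => ‖v a + G‖ + η * (Real.exp ((s - a) / ε) - 1))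
    (B' := fun s => η * (Real.exp ((s - a) / ε) * ε⁻¹))
    (by simp)
    (fun t => (((hexp t).sub_const 1).const_mul η).const_add _)
    (by
      intro t ht
      have h1 := hg t (Ico_subset_Icc_self ht)
      rw [norm_smul, Real.norm_of_nonneg (by positivity), norm_sub_rev, mul_comm]
      gcongr)
    (right_mem_Icc.2 hab)
  simp only [norm_smul, Real.norm_of_nonneg (Real.exp_pos _).le] at key
  rw [Real.exp_neg]
  have hp := Real.exp_pos ((b - a) / ε)
  set X := Real.exp ((b - a) / ε)
  have : ‖v b + G‖ ≤ X⁻¹ * (‖v a + G‖ + η * (X - 1)) := by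
    rw [inv_mul_eq_div, le_div_iff₀ hp]
    linarith
  have e : X⁻¹ * (‖v a + G‖ + η * (X - 1)) = X⁻¹ * ‖v a + G‖ + η - X⁻¹ * η := by
    field_simp
    ring
  have : 0 ≤ X⁻¹ * η := by positivity
  linarith

lemma field_norm_le_s13 {d : ℕ} {M : ℝ}
    {gradK : EuclideanSpace ℝ (Fin d) → EuclideanSpace ℝ (Fin d)}
    (hbound : ∀ z, ‖gradK z‖ ≤ M)
    (μ : Measure (EuclideanSpace ℝ (Fin d))) [IsProbabilityMeasure μ]
    (x : EuclideanSpace ℝ (Fin d)) : ‖interactionField gradK μ x‖ ≤ M := by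
  have := MeasureTheory.norm_integral_le_of_norm_le_const (μ := μ)
    (f := fun y => gradK (x - y)) (C := M) (Eventually.of_forall fun y => hbound _)
  simpa [interactionField] using this

lemma field_integrable {d : ℕ} {M : ℝ}
    {gradK : EuclideanSpace ℝ (Fin d) → EuclideanSpace ℝ (Fin d)}
    (hbound : ∀ z, ‖gradK z‖ ≤ M) (hc : Continuous gradK)
    (μ : Measure (EuclideanSpace ℝ (Fin d))) [IsProbabilityMeasure μ]
    (x : EuclideanSpace ℝ (Fin d)) : Integrable (fun y => gradK (x - y)) μ :=
  Integrable.of_bound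
    (hc.comp (continuous_const.sub continuous_id)).aestronglyMeasurable M
    (Eventually.of_forall fun y => hbound _)

lemma field_lip {d : ℕ} {M : ℝ} {L : NNReal}
    {gradK : EuclideanSpace ℝ (Fin d) → EuclideanSpace ℝ (Fin d)}
    (hbound : ∀ z, ‖gradK z‖ ≤ M) (hlip : LipschitzWith L gradK)
    (μ : Measure (EuclideanSpace ℝ (Fin d))) [IsProbabilityMeasure μ]
    (x z : EuclideanSpace ℝ (Fin d)) :
    ‖interactionField gradK μ x - interactionField gradK μ z‖ ≤ L * ‖x - z‖ := by
  unfold interactionField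
  rw [← integral_sub (field_integrable hbound hlip.continuous μ x)
    (field_integrable hbound hlip.continuous μ z)]
  have := MeasureTheory.norm_integral_le_of_norm_le_const (μ := μ)
    (f := fun y => gradK (x - y) - gradK (z - y)) (C := L * ‖x - z‖)
    (Eventually.of_forall fun y => by
      have := hlip.norm_sub_le (x - y) (z - y)
      simpa using this)
  simpa using this

lemma field_time_cont {d : ℕ} {M T : ℝ}
    {gradK : EuclideanSpace ℝ (Fin d) → EuclideanSpace ℝ (Fin d)}
    (hbound : ∀ z, ‖gradK z‖ ≤ M) (hc : Continuous gradK)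
    (ρ : ℝ → Measure (EuclideanSpace ℝ (Fin d)))
    (hρprob : ∀ t ∈ Icc (0:ℝ) T, IsProbabilityMeasure (ρ t))
    (hρcont : ∀ ψ : BoundedContinuousFunction (EuclideanSpace ℝ (Fin d)) ℝ,
      ContinuousOn (fun t => ∫ x, ψ x ∂(ρ t)) (Icc 0 T))
    (z : EuclideanSpace ℝ (Fin d)) :
    ContinuousOn (fun t => interactionField gradK (ρ t) z) (Icc 0 T) := by
  have hcoord : ∀ i : Fin d,
      ContinuousOn (fun t => (interactionField gradK (ρ t) z) i) (Icc 0 T) := by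
    intro i
    let ψ : BoundedContinuousFunction (EuclideanSpace ℝ (Fin d)) ℝ :=
      BoundedContinuousFunction.ofNormedAddCommGroup (fun y => gradK (z - y) i)
        ((EuclideanSpace.proj (𝕜 := ℝ) i).continuous.comp
          (hc.comp (continuous_const.sub continuous_id))) M
        (fun y => (PiLp.norm_apply_le _ i).trans (hbound _))
    refine (hρcont ψ).congr ?_
    intro t ht
    haveI := hρprob t ht
    exact ((EuclideanSpace.proj (𝕜 := ℝ) i).integral_comp_comm
      (field_integrable hbound hc (ρ t) z)).symm
  have := (PiLp.continuous_toLp 2 (fun _ : Fin d => ℝ)).comp_continuousOn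
    (continuousOn_pi.2 hcoord)
  exact this

/-- Quantitative estimate via `y = x_ε + ε v_ε` and Gronwall. -/
lemma gronwall_estimate {E : Type*} [NormedAddCommGroup E] [NormedSpace ℝ E]
    {T c ε V L : ℝ} (hε : 0 < ε) (hL : 0 ≤ L) (hc : 0 ≤ c) (hV : 0 ≤ V)
    (X v g x F : ℝ → E)
    (hX : ∀ t ∈ Icc (0:ℝ) T, HasDerivAt X (v t) t)
    (hv : ∀ t ∈ Icc (0:ℝ) T, HasDerivAt v (ε⁻¹ • (-(v t) - g t)) t)
    (hx : ∀ t ∈ Icc (0:ℝ) T, HasDerivAt x (-(F t)) t)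
    (h0 : X 0 = x 0) (hvb : ∀ t ∈ Icc (0:ℝ) T, ‖v t‖ ≤ V)
    (hsmall : ε * (L + 1) * V ≤ c / 2)
    (hgF : ∀ t ∈ Icc (0:ℝ) T, ‖g t - F t‖ ≤ c / 2 + L * ‖X t - x t‖) :
    ∀ t ∈ Icc (0:ℝ) T, ‖X t - x t‖ ≤ c * (3 * Real.exp ((L + 1) * T)) := by
  intro t ht
  have hT : 0 ≤ T := ht.1.trans ht.2
  have hεV : ε * V ≤ c / 2 ∧ L * (ε * V) ≤ c / 2 := by
    have : 0 ≤ ε * V := by positivity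
    have : 0 ≤ L * (ε * V) := by positivity
    constructor <;> nlinarith
  have hsplit : ∀ s ∈ Icc (0:ℝ) T, ‖X s - x s‖ ≤ ‖X s + ε • v s - x s‖ + ε * V := by
    intro s hs
    have e : X s - x s = (X s + ε • v s - x s) - ε • v s := by abel
    rw [e]
    refine (norm_sub_le _ _).trans ?_
    rw [norm_smul, Real.norm_of_nonneg hε.le]
    have := hvb s hs
    gcongr
  have hd : ∀ s ∈ Icc (0:ℝ) T, HasDerivAt (fun s => X s + ε • v s - x s) (F s - g s) s := by
    intro s hs
    have := ((hX s hs).add ((hv s hs).const_smul ε)).sub (hx s hs)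
    refine HasDerivAt.congr_deriv this ?_
    rw [smul_smul, mul_inv_cancel₀ hε.ne', one_smul]
    abel
  have h := norm_le_gronwallBound_of_norm_deriv_right_le
    (f := fun s => X s + ε • v s - x s) (f' := fun s => F s - g s)
    (δ := c) (K := L + 1) (ε := c) (a := 0) (b := T)
    (fun s hs => (hd s hs).continuousAt.continuousWithinAt)
    (fun s hs => (hd s (Ico_subset_Icc_self hs)).hasDerivWithinAt)
    (by
      have := hvb 0 ⟨le_rfl, hT⟩
      simp only [h0, add_sub_cancel_left, norm_smul, Real.norm_of_nonneg hε.le]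
      nlinarith)
    (by
      intro s hs
      have hs' := Ico_subset_Icc_self hs
      have h1 := hgF s hs'
      have h2 := hsplit s hs'
      rw [norm_sub_rev]
      have h3 := mul_le_mul_of_nonneg_left h2 hL
      have h4 := norm_nonneg (X s + ε • v s - x s)
      linarith [hεV.2])
    t ht
  rw [gronwallBound_of_K_ne_0 (by positivity)] at h
  simp only [sub_zero] at h
  have hE : Real.exp ((L + 1) * t) ≤ Real.exp ((L + 1) * T) := by
    have := ht.2
    gcongr
  have hE1 : 1 ≤ Real.exp ((L + 1) * T) := Real.one_le_exp (by positivity)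
  have hE2 : 1 ≤ Real.exp ((L + 1) * t) := Real.one_le_exp (mul_nonneg (by positivity) ht.1)
  have hdiv : c / (L + 1) ≤ c := div_le_self hc (by linarith)
  have h5 : c / (L + 1) * (Real.exp ((L + 1) * t) - 1) ≤ c * (Real.exp ((L + 1) * T) - 1) := by
    gcongr
  have h6 : c * Real.exp ((L + 1) * t) ≤ c * Real.exp ((L + 1) * T) := by gcongr
  have h7 : c * 1 ≤ c * Real.exp ((L + 1) * T) := by gcongr
  linarith [hsplit t ht, hεV.1]

/-- **Convergence of characteristic paths in the zero-inertia limit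
(Theorem 5.2).** In the setting of the macroscopic limit — `∇K` bounded and
Lipschitz, `f₀` compactly supported, `fε ε` measure solutions with marginals
`ρ_ε t`, `ρ t` a narrowly continuous family of compactly supported probability
measures with `∇K ∗ ρ_ε → ∇K ∗ ρ` uniformly on `[0,T] ×` compacts — let
`(x₀,v₀) ∈ supp f₀` and `(xε ε, vε ε)` solve the characteristic system
`dx/dt = v`, `ε dv/dt = -v - (∇K ∗ ρ_ε)(t,x)` from `(x₀,v₀)`. Then as
`ε → 0⁺`, `xε ε t → x t` for all `t ∈ [0,T]`, where `x` solves
`dx/dt = -(∇K ∗ ρ)(t,x)`, `x 0 = x₀`, and `vε ε t → -(∇K ∗ ρ(t))(x t)` for all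
`t ∈ (0,T]`. -/
theorem characteristic_paths_zero_inertia_limit
    (d : ℕ) (T M : ℝ) (hT : 0 < T) (hM : 0 ≤ M)
    (gradK : EuclideanSpace ℝ (Fin d) → EuclideanSpace ℝ (Fin d)) (L : NNReal)
    (hbound : ∀ z, ‖gradK z‖ ≤ M)
    (hlip : LipschitzWith L gradK)
    (f₀ : Measure (EuclideanSpace ℝ (Fin d) × EuclideanSpace ℝ (Fin d)))
    [IsProbabilityMeasure f₀]
    (hsupp : ∃ R₀ : ℝ, f₀ {p | R₀ < max ‖p.1‖ ‖p.2‖} = 0)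
    (fε : ℝ → ℝ → Measure (EuclideanSpace ℝ (Fin d) × EuclideanSpace ℝ (Fin d)))
    (hfε : ∀ ε > (0:ℝ), IsKineticMeasureSolution gradK ε T f₀ (fε ε))
    (ρ : ℝ → Measure (EuclideanSpace ℝ (Fin d)))
    (hρprob : ∀ t ∈ Icc (0:ℝ) T, IsProbabilityMeasure (ρ t))
    (hρsupp : ∃ R : ℝ, ∀ t ∈ Icc (0:ℝ) T, ρ t {x | R < ‖x‖} = 0)
    (hρcont : ∀ ψ : BoundedContinuousFunction (EuclideanSpace ℝ (Fin d)) ℝ,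
      ContinuousOn (fun t => ∫ x, ψ x ∂(ρ t)) (Icc 0 T))
    (hfield : ∀ Ω : Set (EuclideanSpace ℝ (Fin d)), IsCompact Ω →
      TendstoUniformlyOn
        (fun ε (p : ℝ × EuclideanSpace ℝ (Fin d)) =>
          interactionField gradK ((fε ε p.1).map Prod.fst) p.2)
        (fun p => interactionField gradK (ρ p.1) p.2)
        (𝓝[>] (0:ℝ)) (Icc 0 T ×ˢ Ω))
    (x₀ v₀ : EuclideanSpace ℝ (Fin d))
    (hx₀v₀ : ∀ U : Set (EuclideanSpace ℝ (Fin d) × EuclideanSpace ℝ (Fin d)),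
      IsOpen U → (x₀, v₀) ∈ U → 0 < f₀ U)   -- (x₀, v₀) ∈ supp f₀
    (xε vε : ℝ → ℝ → EuclideanSpace ℝ (Fin d))
    (hxε0 : ∀ ε > (0:ℝ), xε ε 0 = x₀)
    (hvε0 : ∀ ε > (0:ℝ), vε ε 0 = v₀)
    (hxε : ∀ ε > (0:ℝ), ∀ t ∈ Icc (0:ℝ) T, HasDerivAt (xε ε) (vε ε t) t)
    (hvε : ∀ ε > (0:ℝ), ∀ t ∈ Icc (0:ℝ) T,
      HasDerivAt (vε ε)
        (ε⁻¹ • (-(vε ε t) -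
          interactionField gradK ((fε ε t).map Prod.fst) (xε ε t))) t)
    (x : ℝ → EuclideanSpace ℝ (Fin d))
    (hx0 : x 0 = x₀)
    (hx : ∀ t ∈ Icc (0:ℝ) T,
      HasDerivAt x (-(interactionField gradK (ρ t) (x t))) t) :
    (∀ t ∈ Icc (0:ℝ) T,
      Tendsto (fun ε => xε ε t) (𝓝[>] (0:ℝ)) (𝓝 (x t))) ∧
    (∀ t ∈ Ioc (0:ℝ) T,
      Tendsto (fun ε => vε ε t) (𝓝[>] (0:ℝ))
        (𝓝 (-(interactionField gradK (ρ t) (x t))))) := by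
  have hprob : ∀ ε > (0:ℝ), ∀ t ∈ Icc (0:ℝ) T,
      IsProbabilityMeasure ((fε ε t).map Prod.fst) := by
    intro ε hε t ht
    obtain ⟨Φ, hΦm, -, -, hΦ⟩ := hfε ε hε
    rw [hΦ t ht]
    haveI := Measure.isProbabilityMeasure_map (μ := f₀) (hΦm t).aemeasurable
    exact Measure.isProbabilityMeasure_map measurable_fst.aemeasurable
  set V := ‖v₀‖ + M with hV
  have hV0 : 0 ≤ V := by positivity
  have hvb : ∀ ε > (0:ℝ), ∀ t ∈ Icc (0:ℝ) T, ‖vε ε t‖ ≤ V := by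
    intro ε hε t ht
    have hsub : Icc 0 t ⊆ Icc 0 T := Icc_subset_Icc_right ht.2
    have := relax_estimate hε ht.1 (vε ε)
      (fun s => interactionField gradK ((fε ε s).map Prod.fst) (xε ε s)) 0 hM
      (fun s hs => hvε ε hε s (hsub hs))
      (fun s hs => by
        haveI := hprob ε hε s (hsub hs)
        simpa using field_norm_le_s13 hbound _ _)
    simp only [add_zero, hvε0 ε hε] at this
    have h1 : Real.exp (-((t - 0) / ε)) ≤ 1 := by
      apply Real.exp_le_one_iff.2
      have : 0 ≤ (t - 0) / ε := div_nonneg (by linarith [ht.1]) hε.le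
      linarith
    have h2 := mul_le_mul_of_nonneg_right h1 (norm_nonneg v₀)
    linarith
  have hxb : ∀ ε > (0:ℝ), ∀ t ∈ Icc (0:ℝ) T, xε ε t ∈ Metric.closedBall x₀ (V * T) := by
    intro ε hε t ht
    have := Convex.norm_image_sub_le_of_norm_hasDerivWithin_le (f := xε ε) (f' := vε ε)
      (fun s hs => (hxε ε hε s hs).hasDerivWithinAt) (hvb ε hε) (convex_Icc (0:ℝ) T)
      (left_mem_Icc.2 hT.le) ht
    rw [hxε0 ε hε, sub_zero, Real.norm_of_nonneg ht.1] at this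
    rw [Metric.mem_closedBall, dist_eq_norm]
    exact this.trans (mul_le_mul_of_nonneg_left ht.2 hV0)
  have key : ∀ η > (0:ℝ), ∀ᶠ ε in 𝓝[>] (0:ℝ), ∀ t ∈ Icc (0:ℝ) T,
      ‖xε ε t - x t‖ ≤ η ∧
      ‖interactionField gradK ((fε ε t).map Prod.fst) (xε ε t) -
        interactionField gradK (ρ t) (x t)‖ ≤ η := by
    intro η hη
    set C := 3 * Real.exp (((L:ℝ) + 1) * T) with hC
    have hC0 : 0 < C := by positivity
    have hL0 : (0:ℝ) ≤ L := L.2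
    set c := η / (1 + (L + 1) * C) with hc
    have hden : 0 < 1 + (L + 1) * C := by positivity
    have hc0 : 0 < c := by positivity
    have hcη : c * (1 + (L + 1) * C) = η := div_mul_cancel₀ _ hden.ne'
    have hunif := Metric.tendstoUniformlyOn_iff.1
      (hfield _ (isCompact_closedBall x₀ (V * T))) (c / 2) (by positivity)
    have hsm : ∀ᶠ ε in 𝓝[>] (0:ℝ), ε * (L + 1) * V < c / 2 := by
      have : Tendsto (fun ε : ℝ => ε * (L + 1) * V) (𝓝[>] 0) (𝓝 (0 * (L + 1) * V)) :=
        (Continuous.tendsto (by fun_prop) 0).mono_left nhdsWithin_le_nhds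
      refine this.eventually_lt_const ?_
      simpa using hc0
    filter_upwards [hunif, hsm, self_mem_nhdsWithin] with ε hu hs hε
    have hε : 0 < ε := hε
    have hdiff : ∀ t ∈ Icc (0:ℝ) T,
        ‖interactionField gradK ((fε ε t).map Prod.fst) (xε ε t) -
        interactionField gradK (ρ t) (x t)‖ ≤ c / 2 + L * ‖xε ε t - x t‖ := by
      intro t ht
      haveI := hρprob t ht
      have h1 := hu (t, xε ε t) ⟨ht, hxb ε hε t ht⟩
      rw [dist_comm, dist_eq_norm] at h1
      have h2 := field_lip hbound hlip (ρ t) (xε ε t) (x t)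
      have h3 := norm_sub_le_norm_sub_add_norm_sub
        (interactionField gradK ((fε ε t).map Prod.fst) (xε ε t))
        (interactionField gradK (ρ t) (xε ε t)) (interactionField gradK (ρ t) (x t))
      simp only at h1
      linarith
    have hg := gronwall_estimate hε hL0 hc0.le hV0 (xε ε) (vε ε)
      (fun t => interactionField gradK ((fε ε t).map Prod.fst) (xε ε t)) x
      (fun t => interactionField gradK (ρ t) (x t))
      (hxε ε hε) (hvε ε hε) hx ((hxε0 ε hε).trans hx0.symm) (hvb ε hε) hs.le hdiff
    intro t ht
    have h1 := hg t ht
    rw [← hC] at h1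
    have h2 := hdiff t ht
    have h3 := mul_le_mul_of_nonneg_left h1 hL0
    have h4 : 0 ≤ L * (c * C) := by positivity
    have h5 : 0 ≤ c * C := by positivity
    have h6 : c + L * (c * C) + c * C = η := by rw [← hcη]; ring
    constructor <;> linarith
  refine ⟨?_, ?_⟩
  · intro t ht
    rw [Metric.tendsto_nhds]
    intro η hη
    filter_upwards [key (η / 2) (by positivity)] with ε h
    rw [dist_eq_norm]
    linarith [(h t ht).1]
  · intro t ht
    have ht' : t ∈ Icc (0:ℝ) T := Ioc_subset_Icc_self ht
    set G := interactionField gradK (ρ t) (x t) with hG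
    rw [Metric.tendsto_nhds]
    intro η hη
    -- continuity in time of the limiting field along the limiting path
    have hcont : Tendsto (fun s => interactionField gradK (ρ s) (x s)) (𝓝[Icc 0 T] t) (𝓝 G) := by
      have h1 : Tendsto (fun s => interactionField gradK (ρ s) (x t)) (𝓝[Icc 0 T] t) (𝓝 G) :=
        field_time_cont hbound hlip.continuous ρ hρprob hρcont (x t) t ht'
      have h2 : Tendsto (fun s => (L:ℝ) * ‖x s - x t‖) (𝓝[Icc 0 T] t) (𝓝 0) := by
        have := (hx t ht').continuousAt.continuousWithinAt (s := Icc 0 T)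
        have h := ((tendsto_iff_norm_sub_tendsto_zero.1 this).const_mul (L:ℝ))
        simpa using h
      have h3 : Tendsto (fun s => interactionField gradK (ρ s) (x s) -
          interactionField gradK (ρ s) (x t)) (𝓝[Icc 0 T] t) (𝓝 0) := by
        refine squeeze_zero_norm' ?_ h2
        filter_upwards [self_mem_nhdsWithin] with s hs
        haveI := hρprob s hs
        exact field_lip hbound hlip (ρ s) (x s) (x t)
      simpa using h3.add h1
    obtain ⟨δ, hδ, hδG⟩ := Metric.tendsto_nhdsWithin_nhds.1 hcont (η / 4) (by positivity)
    obtain ⟨r, hr0, hrδ, hrt⟩ : ∃ r : ℝ, 0 < r ∧ r < δ ∧ r ≤ t := by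
      refine ⟨min (δ / 2) t, lt_min (by positivity) ht.1, ?_, min_le_right _ _⟩
      exact (min_le_left _ _).trans_lt (by linarith)
    have hdecay : ∀ᶠ ε in 𝓝[>] (0:ℝ), Real.exp (-(r / ε)) * (V + ‖G‖) < η / 4 := by
      have h1 : Tendsto (fun ε : ℝ => r / ε) (𝓝[>] 0) atTop := by
        simpa [div_eq_mul_inv] using
          (tendsto_inv_nhdsGT_zero (𝕜 := ℝ)).const_mul_atTop hr0
      have h2 := (Real.tendsto_exp_neg_atTop_nhds_zero.comp h1).mul_const (V + ‖G‖)
      rw [zero_mul] at h2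
      exact h2.eventually_lt_const (by positivity)
    filter_upwards [key (η / 4) (by positivity), hdecay, self_mem_nhdsWithin] with ε hk hd hε
    have hε : 0 < ε := hε
    have hsub : Icc (t - r) t ⊆ Icc 0 T := Icc_subset_Icc (by linarith) ht.2
    have h := relax_estimate hε (a := t - r) (b := t) (η := η / 2) (by linarith) (vε ε)
      (fun s => interactionField gradK ((fε ε s).map Prod.fst) (xε ε s)) G (by positivity)
      (fun s hs => hvε ε hε s (hsub hs))
      (fun s hs => by
        have h1 := (hk s (hsub hs)).2
        have h2 := hδG (hsub hs) (by
          rw [Real.dist_eq, abs_lt]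
          constructor <;> linarith [hs.1, hs.2])
        rw [dist_eq_norm] at h2
        have h3 := norm_sub_le_norm_sub_add_norm_sub
          (interactionField gradK ((fε ε s).map Prod.fst) (xε ε s))
          (interactionField gradK (ρ s) (x s)) G
        linarith)
    have h1 : ‖vε ε (t - r) + G‖ ≤ V + ‖G‖ :=
      (norm_add_le _ _).trans (by
        have := hvb ε hε (t - r) (hsub (left_mem_Icc.2 (by linarith)))
        linarith)
    have h2 := mul_le_mul_of_nonneg_left h1 (Real.exp_pos (-(r / ε))).le
    rw [sub_sub_cancel] at h
    rw [dist_eq_norm, sub_neg_eq_add]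
    linarith
end
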